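/- Let n ≥ 8 be a natural number and r a natural number with 1 ≤ r ≤ ⌊n/4⌋. Set x_1 := −1 + 2/n, x_2 := 2/n − 1/x_1, b_1 := x_1 + r·(1 − 1/x_2), φ := arctan(√(n² − 1)), P := π/φ, ω_r := arctan((1 − n·b_1)/√(n² − 1)) − φ, and k₀ := ⌊1/(P − 2) + (ω_r − arctan(1/√(n² − 1)))/(φ·(P − 2))⌋. Then the maximum length of alternating signs mlas_r(n) := 2k₀ + 2 satisfies mlas_r(n) ≥ max{ 2·⌊(π/8)·(n − 2)⌋ − 4(r − 1), 2 }. -/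

import Mathlib

theorem aux_nn (n s m : ℝ) (hm : 0 ≤ m) (hms : m ≤ n) (hs : 0 ≤ s) :
    0 ≤ n * s + m * (n + s) - m ^ 2 := by
  have h1 : 0 ≤ n * s := mul_nonneg (hm.trans hms) hs
  have h2 : 0 ≤ m * (n - m) := mul_nonneg hm (by linarith)
  have h3 : 0 ≤ m * s := mul_nonneg hm hs
  nlinarith

theorem aux_arctan_le (x : ℝ) (hx : 0 ≤ x) : Real.arctan x ≤ x := by
  have h := Real.le_tan (Real.arctan_nonneg.2 hx) (Real.arctan_lt_pi_div_two x)
  rwa [Real.tan_arctan] at h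

theorem aux_arctan_ge (t : ℝ) (h0 : 0 < t) (h1 : t ≤ 1) :
    Real.pi / 4 - (1 - t) / (1 + t) ≤ Real.arctan t := by
  have hu : 0 ≤ (1 - t) / (1 + t) := div_nonneg (by linarith) (by linarith)
  have hmul : t * ((1 - t) / (1 + t)) < 1 := by
    rw [← mul_div_assoc, div_lt_one (by linarith)]
    nlinarith
  have h := Real.arctan_add hmul
  have h2 : (t + (1 - t) / (1 + t)) / (1 - t * ((1 - t) / (1 + t))) = 1 := by
    rw [div_eq_one_iff_eq (by linarith)]
    field_simp
    ring
  rw [h2, Real.arctan_one] at h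
  have := aux_arctan_le _ hu
  linarith

/-- polynomial inequality for large `n` -/
theorem aux_poly (n r : ℝ) (hn : 20 ≤ n) (hr1 : 1 ≤ r) (hr2 : 4 * r ≤ n) :
    n ^ 2 * ((n ^ 2 + 2 * n - 4) + 4 * r * (n * (n - 1))) ≤
      ((2 * n - 1) * (n ^ 2 + 2 * n - 4) - 4 * r * (n * (n - 1))) *
        (0.785 * (2 * n - 1) + 4 * r * n - 3 * n) := by
  have hg : 0 ≤ ((2 * n - 1) * (n ^ 2 + 2 * n - 4) - 4 * 1 * (n * (n - 1))) *
        (0.785 * (2 * n - 1) + 4 * 1 * n - 3 * n) -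
        n ^ 2 * ((n ^ 2 + 2 * n - 4) + 4 * 1 * (n * (n - 1))) := by
    obtain ⟨x, rfl⟩ : ∃ x, n = 20 + x := ⟨n - 20, by ring⟩
    have hx : 0 ≤ x := by linarith
    ring_nf
    positivity
  have hh : 0 ≤ -8 * (n * (n - 1)) * n ^ 2
      - 4 * (n * (n - 1)) * (0.785 * (2 * n - 1) - 3 * n)
      + 4 * n * (2 * n - 1) * (n ^ 2 + 2 * n - 4) - 16 * (n * (n - 1)) * n := by
    obtain ⟨x, rfl⟩ : ∃ x, n = 20 + x := ⟨n - 20, by ring⟩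
    have hx : 0 ≤ x := by linarith
    ring_nf
    positivity
  have hK : 0 ≤ 16 * (n * (n - 1)) * n := by
    have : 0 ≤ n - 1 := by linarith
    have : 0 ≤ n := by linarith
    positivity
  have h1 := mul_nonneg (sub_nonneg.2 hr1) hh
  have h2 := mul_nonneg (mul_nonneg (sub_nonneg.2 hr1) hK) (by linarith : 0 ≤ n / 4 - r)
  linarith

/-- the rational inequality, after clearing denominators -/
theorem aux_key (n r : ℕ) (hn : 8 ≤ n) (hr1 : 1 ≤ r) (hr2 : r ≤ n / 4) (F : ℤ)
    (hF : (F : ℝ) ≤ (Real.pi / 8) * ((n : ℝ) - 2)) :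
    (n : ℝ) ^ 2 * (((n : ℝ) ^ 2 + 2 * n - 4) + 4 * r * (n * ((n : ℝ) - 1))) ≤
      ((2 * (n : ℝ) - 1) * ((n : ℝ) ^ 2 + 2 * n - 4) - 4 * r * (n * ((n : ℝ) - 1))) *
        (Real.pi / 4 * ((n : ℝ) ^ 2 - 1) - (2 * F - 4 * r + 3) * n) := by
  have hp1 := Real.pi_gt_d4
  have hp2 := Real.pi_lt_d4
  have hr2' : 4 * r ≤ n := by omega
  rcases le_or_gt 20 n with h | h
  · have hnR : (20 : ℝ) ≤ n := by exact_mod_cast h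
    have hrR : (1 : ℝ) ≤ r := by exact_mod_cast hr1
    have hrR2 : 4 * (r : ℝ) ≤ n := by exact_mod_cast hr2'
    refine (aux_poly n r hnR hrR hrR2).trans ?_
    apply mul_le_mul_of_nonneg_left
    · nlinarith
    · have : 4 * (r : ℝ) * (n * ((n : ℝ) - 1)) ≤ n * (n * ((n : ℝ) - 1)) := by
        apply mul_le_mul_of_nonneg_right hrR2
        nlinarith
      nlinarith
  · have key : ∀ k : ℤ, 3.1416 / 8 * ((n : ℝ) - 2) < k + 1 → F ≤ k := by
      intro k hk
      have hnR : (8 : ℝ) ≤ n := by exact_mod_cast hn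
      have : (F : ℝ) < k + 1 := by nlinarith
      exact Int.lt_add_one_iff.1 (by exact_mod_cast this)
    have key' : ∀ k : ℤ, 3.1416 / 8 * ((n : ℝ) - 2) < k + 1 → (F : ℝ) ≤ k := by
      intro k hk
      exact_mod_cast key k hk
    clear key
    have hr3 : r ≤ 4 := by omega
    have h19 : n ≤ 19 := by omega
    interval_cases n
    · have hk := key' 2 (by norm_num)
      interval_cases r <;> first | omega | (norm_num at hk ⊢; linarith)
    · have hk := key' 2 (by norm_num)
      interval_cases r <;> first | omega | (norm_num at hk ⊢; linarith)
    · have hk := key' 3 (by norm_num)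
      interval_cases r <;> first | omega | (norm_num at hk ⊢; linarith)
    · have hk := key' 3 (by norm_num)
      interval_cases r <;> first | omega | (norm_num at hk ⊢; linarith)
    · have hk := key' 3 (by norm_num)
      interval_cases r <;> first | omega | (norm_num at hk ⊢; linarith)
    · have hk := key' 4 (by norm_num)
      interval_cases r <;> first | omega | (norm_num at hk ⊢; linarith)
    · have hk := key' 4 (by norm_num)
      interval_cases r <;> first | omega | (norm_num at hk ⊢; linarith)
    · have hk := key' 5 (by norm_num)
      interval_cases r <;> first | omega | (norm_num at hk ⊢; linarith)
    · have hk := key' 5 (by norm_num)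
      interval_cases r <;> first | omega | (norm_num at hk ⊢; linarith)
    · have hk := key' 5 (by norm_num)
      interval_cases r <;> first | omega | (norm_num at hk ⊢; linarith)
    · have hk := key' 6 (by norm_num)
      interval_cases r <;> first | omega | (norm_num at hk ⊢; linarith)
    · have hk := key' 6 (by norm_num)
      interval_cases r <;> first | omega | (norm_num at hk ⊢; linarith)

set_option maxHeartbeats 1000000 in
/-- Theorem 5.6: in the setting of Theorem 5.2, the maximum length of alternating
signs mlas_r(n) = 2k₀ + 2 satisfies
mlas_r(n) ≥ max{2⌊(π/8)(n − 2)⌋ − 4(r − 1), 2}. -/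
theorem mlas_lower_bound (n r : ℕ) (hn : 8 ≤ n) (hr1 : 1 ≤ r) (hr2 : r ≤ n / 4)
    (x1 x2 b1 : ℝ) (hx1 : x1 = -1 + 2 / (n : ℝ)) (hx2 : x2 = 2 / (n : ℝ) - 1 / x1)
    (hb1 : b1 = x1 + (r : ℝ) * (1 - 1 / x2))
    (φ P ω : ℝ) (hφ : φ = Real.arctan (Real.sqrt ((n : ℝ) ^ 2 - 1)))
    (hP : P = Real.pi / φ)
    (hω : ω = Real.arctan ((1 - (n : ℝ) * b1) / Real.sqrt ((n : ℝ) ^ 2 - 1)) - φ)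
    (k₀ : ℤ)
    (hk₀ : k₀ = ⌊1 / (P - 2) +
      (ω - Real.arctan (1 / Real.sqrt ((n : ℝ) ^ 2 - 1))) / (φ * (P - 2))⌋) :
    2 * k₀ + 2 ≥
      max (2 * ⌊(Real.pi / 8) * ((n : ℝ) - 2)⌋ - 4 * ((r : ℤ) - 1)) 2 := by
  have hnR : (8 : ℝ) ≤ n := by exact_mod_cast hn
  have hrR : (1 : ℝ) ≤ r := by exact_mod_cast hr1
  have hrR2 : 4 * (r : ℝ) ≤ n := by
    have : 4 * r ≤ n := by omega
    exact_mod_cast this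
  set s := Real.sqrt ((n : ℝ) ^ 2 - 1) with hs
  have hs2 : s ^ 2 = (n : ℝ) ^ 2 - 1 := Real.sq_sqrt (by nlinarith)
  have hs0 : 0 ≤ s := Real.sqrt_nonneg _
  have hspos : 0 < s := by nlinarith
  have hsn : s ≤ n := by nlinarith
  have hsn1 : (n : ℝ) - 1 ≤ s := by nlinarith
  have hsn2 : (n : ℝ) ^ 2 - 1 ≤ s * n := by nlinarith
  set D : ℝ := (n : ℝ) ^ 2 + 2 * n - 4 with hD
  have hDpos : 0 < D := by nlinarith
  set m : ℝ := 1 - (n : ℝ) * b1 with hm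
  have hn0 : (n : ℝ) ≠ 0 := by positivity
  have hn2 : (n : ℝ) - 2 ≠ 0 := by linarith
  have hx1' : x1 = -((n : ℝ) - 2) / n := by rw [hx1]; field_simp; ring
  have hx2' : x2 = D / (n * ((n : ℝ) - 2)) := by
    rw [hx2, hx1', hD, one_div_div, neg_eq_neg_one_mul]
    field_simp
    ring
  have hmD : m * D = (n - 1) * D - 4 * r * (n * ((n : ℝ) - 1)) := by
    rw [hm, hb1, hx2', hx1', one_div_div]
    field_simp
    rw [hD]
    ring
  have hm1 : 1 ≤ m := by
    have : 4 * (r : ℝ) * (n * ((n : ℝ) - 1)) ≤ n * (n * ((n : ℝ) - 1)) := by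
      apply mul_le_mul_of_nonneg_right hrR2
      nlinarith
    have : 1 * D ≤ m * D := by rw [hmD, hD]; nlinarith
    exact le_of_mul_le_mul_right this hDpos
  have hmn : m ≤ n - 1 := by
    have : 0 ≤ 4 * (r : ℝ) * (n * ((n : ℝ) - 1)) := by
      have : 0 ≤ (n : ℝ) - 1 := by linarith
      positivity
    have : m * D ≤ (n - 1) * D := by linarith
    exact le_of_mul_le_mul_right this hDpos
  set θ := Real.arctan (1 / s) with hθ
  have hθpos : 0 < θ := Real.arctan_pos.2 (by positivity)
  have hθle : θ ≤ 1 / s := aux_arctan_le _ (by positivity)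
  have hφθ : φ = Real.pi / 2 - θ := by
    rw [hθ, one_div, Real.arctan_inv_of_pos hspos, hφ]; ring
  have hφpos : 0 < φ := by rw [hφ]; exact Real.arctan_pos.2 hspos
  have hP2 : P - 2 = 2 * θ / φ := by
    rw [hP]
    field_simp
    linarith
  set A := Real.arctan (m / s) with hA
  have hk : k₀ = ⌊(A - θ) / (2 * θ)⌋ := by
    rw [hk₀, hP2, hω]
    congr 1
    field_simp
    ring
  have hz : ∀ z : ℤ, θ * (2 * z + 1) ≤ A → z ≤ k₀ := by
    intro z hz
    rw [hk, Int.le_floor, le_div_iff₀ (by positivity)]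
    linarith
  have hAθ : θ ≤ A := by
    apply Real.arctan_le_arctan_iff.2
    gcongr
  have h0 : 0 ≤ k₀ := hz 0 (by push_cast; linarith)
  set F := ⌊(Real.pi / 8) * ((n : ℝ) - 2)⌋ with hFdef
  have hF : (F : ℝ) ≤ (Real.pi / 8) * ((n : ℝ) - 2) := Int.floor_le _
  have hkey := aux_key n r hn hr1 hr2 F hF
  rw [← hD] at hkey
  have h1 : F - 2 * r + 1 ≤ k₀ := by
    apply hz
    push_cast
    set C : ℝ := 2 * ((F : ℝ) - 2 * r + 1) + 1 with hC
    rcases le_or_gt C 0 with hC0 | hC0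
    · exact (mul_nonpos_of_nonneg_of_nonpos hθpos.le hC0).trans (hθpos.le.trans hAθ)
    have hA1 : Real.pi / 4 - (1 - m / s) / (1 + m / s) ≤ A :=
      aux_arctan_ge _ (by positivity) (by rw [div_le_one hspos]; linarith)
    have hu : (1 - m / s) / (1 + m / s) = (s - m) / (s + m) := by
      field_simp
    rw [hu] at hA1
    have hsu : s * ((s - m) / (s + m)) ≤ n * ((n - m) / (n + m)) := by
      rw [← mul_div_assoc, ← mul_div_assoc, div_le_div_iff₀ (by linarith) (by linarith)]
      have : 0 ≤ (n - s) * (n * s + m * (n + s) - m ^ 2) :=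
        mul_nonneg (by linarith) (aux_nn n s m (by linarith) (by linarith) hs0)
      linarith
    have hkey2 : n * ((n - m) / (n + m)) ≤ Real.pi / 4 * s - C := by
      rw [← mul_div_assoc, div_le_iff₀ (by linarith)]
      have e1 : D + 4 * r * (n * ((n : ℝ) - 1)) = (n - m) * D := by linarith
      have e2 : (2 * (n : ℝ) - 1) * D - 4 * r * (n * ((n : ℝ) - 1)) = (n + m) * D := by
        linarith
      rw [e1, e2] at hkey
      have h3 : (Real.pi / 4 * ((n : ℝ) ^ 2 - 1) - (2 * F - 4 * r + 3) * n) ≤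
          (Real.pi / 4 * s - C) * n := by
        have := mul_le_mul_of_nonneg_left hsn2 (by positivity : 0 ≤ Real.pi / 4)
        rw [hC]
        linarith
      have h4 := hkey.trans (mul_le_mul_of_nonneg_left h3
        (mul_nonneg (by linarith) hDpos.le : 0 ≤ (n + m) * D))
      have hDn : 0 < D * n := by positivity
      refine le_of_mul_le_mul_right (a := D * n) ?_ hDn
      linarith
    have h5 : C ≤ s * A := by
      have := mul_le_mul_of_nonneg_left hA1 hs0
      linarith
    calc θ * C ≤ 1 / s * C := by gcongr
      _ ≤ A := by rw [one_div_mul_eq_div, div_le_iff₀ hspos]; linarith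
  apply max_le <;> omega
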